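/- arXiv:2003.12340 — 8 statements merged into one kernel-verified Lean document; each statement's English description precedes it below -/
import Mathlib

section
/- Let (α_n)_{n≥0} and (a_n)_{n≥0} be sequences with α_n ∈ (0,1/2) and a_n an integer with a_n ≥ 2, satisfying 1/α_n = a_n − α_{n+1} for all n ≥ 0, and let (u_n)_{n≥0} be positive reals such that (i) Σ_{n≥0} u_0 u_1 ⋯ u_n = +∞ and (ii) a_{n+1} ≥ a_n^{u_n a_n} + 1/2 for all n ≥ 0. Then the Brjuno sum diverges: Σ_{n≥0} β_{n−1} log(1/α_n) = +∞. -/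
open Filter

/-- Any jagged number has divergent Brjuno sum (is of non-Brjuno type). -/
theorem jagged_brjuno_sum_diverges
    (α : ℕ → ℝ) (a : ℕ → ℤ) (u : ℕ → ℝ)
    (hα : ∀ n, α n ∈ Set.Ioo (0:ℝ) (1/2))
    (ha : ∀ n, 2 ≤ a n)
    (hrec : ∀ n, 1 / α n = (a n : ℝ) - α (n+1))
    (hu : ∀ n, 0 < u n)
    (hdiv : ∑' n, ENNReal.ofReal (∏ k ∈ Finset.range (n+1), u k) = ⊤)
    (hgrow : ∀ n, ((a n : ℝ)) ^ (u n * (a n : ℝ)) + 1/2 ≤ ((a (n+1) : ℤ) : ℝ)) :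
    ∑' n, ENNReal.ofReal ((∏ k ∈ Finset.range n, α k) * Real.log (1 / α n)) = ⊤ := by
  have hpos : ∀ n, 0 < α n := fun n => (hα n).1
  have hlt : ∀ n, α n < 1 / 2 := fun n => (hα n).2
  have hL0 : 0 < Real.log (1 / α 0) := by
    apply Real.log_pos
    rw [lt_div_iff₀ (hpos 0)]
    linarith [hlt 0]
  have hstep : ∀ n, u n * Real.log (1 / α n) ≤ α n * Real.log (1 / α (n + 1)) := by
    intro n
    have ha2 : (2 : ℝ) ≤ (a n : ℝ) := by exact_mod_cast ha n
    have ha0 : (0 : ℝ) < (a n : ℝ) := by linarith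
    have h1 : (a n : ℝ) ^ (u n * (a n : ℝ)) ≤ 1 / α (n + 1) := by
      have := hgrow n
      have := hrec (n + 1)
      have := hlt (n + 1 + 1)
      linarith
    have h2 : u n * (a n : ℝ) * Real.log (a n) ≤ Real.log (1 / α (n + 1)) := by
      rw [← Real.log_rpow ha0]
      exact Real.log_le_log (Real.rpow_pos_of_pos ha0 _) h1
    have h3 : 1 / α n ≤ (a n : ℝ) := by
      have := hrec n
      have := hpos (n + 1)
      linarith
    have h4 : Real.log (1 / α n) ≤ Real.log (a n) :=
      Real.log_le_log (one_div_pos.mpr (hpos n)) h3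
    have h5 : 1 ≤ α n * (a n : ℝ) := by
      rw [div_le_iff₀ (hpos n)] at h3
      linarith
    have h6 : 0 ≤ Real.log (a n) := Real.log_nonneg (by linarith)
    have hun := hu n
    calc u n * Real.log (1 / α n) ≤ u n * Real.log (a n) := by gcongr
      _ ≤ (α n * (a n : ℝ)) * (u n * Real.log (a n)) :=
          le_mul_of_one_le_left (mul_nonneg hun.le h6) h5
      _ = α n * (u n * (a n : ℝ) * Real.log (a n)) := by ring
      _ ≤ α n * Real.log (1 / α (n + 1)) := mul_le_mul_of_nonneg_left h2 (hpos n).le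
  have hmain : ∀ n, Real.log (1 / α 0) * (∏ k ∈ Finset.range n, u k) ≤
      (∏ k ∈ Finset.range n, α k) * Real.log (1 / α n) := by
    intro n
    induction n with
    | zero => simp
    | succ n ih =>
      rw [Finset.prod_range_succ, Finset.prod_range_succ]
      have hP : 0 ≤ ∏ k ∈ Finset.range n, α k := Finset.prod_nonneg fun k _ => (hpos k).le
      have e1 := mul_le_mul_of_nonneg_right ih (hu n).le
      have e2 := mul_le_mul_of_nonneg_left (hstep n) hP
      linarith
  rw [eq_top_iff]
  calc (⊤ : ENNReal) = ENNReal.ofReal (Real.log (1 / α 0)) *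
        ∑' n, ENNReal.ofReal (∏ k ∈ Finset.range (n+1), u k) := by
        rw [hdiv, ENNReal.mul_top]
        exact (ENNReal.ofReal_pos.mpr hL0).ne'
    _ = ∑' n, ENNReal.ofReal (Real.log (1 / α 0) * ∏ k ∈ Finset.range (n+1), u k) := by
        rw [← ENNReal.tsum_mul_left]
        exact tsum_congr fun n => (ENNReal.ofReal_mul hL0.le).symm
    _ ≤ ∑' n, ENNReal.ofReal ((∏ k ∈ Finset.range (n+1), α k) * Real.log (1 / α (n+1))) :=
        ENNReal.tsum_le_tsum fun n => ENNReal.ofReal_le_ofReal (hmain (n+1))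
    _ ≤ _ := ENNReal.tsum_comp_le_tsum_of_injective (add_left_injective 1)
        (fun n => ENNReal.ofReal ((∏ k ∈ Finset.range n, α k) * Real.log (1 / α n)))
end

section
/- Let (α_n)_{n≥0} and (a_n)_{n≥0} be sequences with α_n ∈ (0,1/2) and a_n an integer with a_n ≥ 2, satisfying 1/α_n = a_n − α_{n+1} for all n ≥ 0, and let (u_n)_{n≥0} be positive reals such that a_{n+1} ≥ a_n^{u_n a_n} + 1/2 for all n ≥ 0. Then for every n ≥ 0 one has 1/α_{n+1} > (1/α_n)^{u_n/α_n}, and consequently log(1/α_{n+1}) ≥ (u_n/α_n) · log(1/α_n). -/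
open Filter

/-- For a jagged number one has `1/α_{n+1} > (1/α_n)^{u_n/α_n}` and hence
`log(1/α_{n+1}) ≥ (u_n/α_n) · log(1/α_n)` for every `n`. -/
theorem jagged_growth_estimate
    (α : ℕ → ℝ) (a : ℕ → ℤ) (u : ℕ → ℝ)
    (hα : ∀ n, α n ∈ Set.Ioo (0:ℝ) (1/2))
    (ha : ∀ n, 2 ≤ a n)
    (hrec : ∀ n, 1 / α n = (a n : ℝ) - α (n+1))
    (hu : ∀ n, 0 < u n)
    (hgrow : ∀ n, ((a n : ℝ)) ^ (u n * (a n : ℝ)) + 1/2 ≤ ((a (n+1) : ℤ) : ℝ)) :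
    ∀ n, (1 / α n) ^ (u n / α n) < 1 / α (n+1) ∧
      (u n / α n) * Real.log (1 / α n) ≤ Real.log (1 / α (n+1)) := by
  intro n
  obtain ⟨h0, h0'⟩ := hα n
  obtain ⟨h1, h1'⟩ := hα (n+1)
  obtain ⟨h2, h2'⟩ := hα (n+2)
  have hr0 := hrec n
  have hr1 : 1 / α (n+1) = (a (n+1) : ℝ) - α (n+2) := hrec (n+1)
  have hun := hu n
  have hg := hgrow n
  have ha2 : (2:ℝ) ≤ a n := by exact_mod_cast ha n
  have hpos : 0 < 1 / α n := by positivity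
  have hlt : 1 / α n ≤ a n := by linarith
  have key : (1 / α n) ^ (u n / α n) < 1 / α (n+1) := by
    have e1 : (1 / α n) ^ (u n / α n) ≤ (a n : ℝ) ^ (u n / α n) :=
      Real.rpow_le_rpow hpos.le hlt (by positivity)
    have e2 : (a n : ℝ) ^ (u n / α n) ≤ (a n : ℝ) ^ (u n * (a n : ℝ)) := by
      apply Real.rpow_le_rpow_of_exponent_le (by linarith)
      have := mul_le_mul_of_nonneg_left hlt hun.le
      rwa [mul_one_div] at this
    linarith
  refine ⟨key, ?_⟩
  rw [← Real.log_rpow hpos]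
  exact Real.log_le_log (Real.rpow_pos_of_pos hpos _) key.le
end

section
/- Let (α_n)_{n≥0} and (a_n)_{n≥0} be sequences with α_n ∈ (0,1/2) and a_n an integer with a_n ≥ 2, satisfying 1/α_n = a_n − α_{n+1} for all n ≥ 0. Suppose there are positive reals (v_n)_{n≥0} with v_n → +∞ and a uniformly bounded sequence of reals (η_n)_{n≥0} such that a_{n+1} = e^{v_n a_n} + η_n for all n ≥ 0, and Σ_{n≥1} v_n/(a_0 a_1 ⋯ a_{n−1}) < +∞. Then the Brjuno sum converges: Σ_{n≥0} β_{n−1} log(1/α_n) < +∞. -/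
open Filter

/-- Any spiky number is of Brjuno type: its Brjuno sum converges. -/
theorem spiky_brjuno_sum_converges
    (α : ℕ → ℝ) (a : ℕ → ℤ) (v η : ℕ → ℝ)
    (hα : ∀ n, α n ∈ Set.Ioo (0:ℝ) (1/2))
    (ha : ∀ n, 2 ≤ a n)
    (hrec : ∀ n, 1 / α n = (a n : ℝ) - α (n+1))
    (hv : ∀ n, 0 < v n)
    (hvlim : Tendsto v atTop atTop)
    (hη : ∃ C, ∀ n, |η n| ≤ C)
    (hform : ∀ n, ((a (n+1) : ℤ) : ℝ) = Real.exp (v n * (a n : ℝ)) + η n)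
    (hsum : ∑' n, ENNReal.ofReal (v (n+1) / ∏ k ∈ Finset.range (n+1), ((a k : ℤ) : ℝ)) ≠ ⊤) :
    ∑' n, ENNReal.ofReal ((∏ k ∈ Finset.range n, α k) * Real.log (1 / α n)) ≠ ⊤ := by
  obtain ⟨C, hC⟩ := hη
  have hC0 : 0 ≤ C := le_trans (abs_nonneg _) (hC 0)
  have ha' : ∀ n, (2:ℝ) ≤ (a n : ℝ) := fun n => by exact_mod_cast ha n
  have hmul : ∀ n, α n * (a n : ℝ) = 1 + α n * α (n+1) := fun n => by
    have h := hrec n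
    have h0 := (hα n).1.ne'
    have : α n * (1 / α n) = 1 := by field_simp
    rw [h] at this
    linarith
  -- summability of the reciprocals
  have hsa : Summable (fun n => ((a n : ℝ))⁻¹) := by
    refine summable_of_ratio_norm_eventually_le (r := 1/2) (by norm_num) ?_
    filter_upwards [hvlim.eventually_ge_atTop (2 + C)] with n hn
    have h1 := ha' n
    have h2 := ha' (n+1)
    rw [norm_inv, norm_inv, Real.norm_of_nonneg (by linarith), Real.norm_of_nonneg (by linarith)]
    have h3 : 2 * (a n : ℝ) ≤ a (n+1) := by
      rw [hform n]
      have e := Real.add_one_le_exp (v n * (a n : ℝ))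
      have := (abs_le.1 (hC n)).1
      nlinarith
    calc ((a (n+1) : ℝ))⁻¹ ≤ (2 * (a n : ℝ))⁻¹ := by
          apply inv_anti₀ (by linarith) h3
      _ = 1/2 * ((a n : ℝ))⁻¹ := by rw [mul_inv]; norm_num
  have hsx : Summable (fun n => α n * α (n+1)) := by
    refine Summable.of_nonneg_of_le (fun n => (mul_pos (hα n).1 (hα (n+1)).1).le) (fun n => ?_)
      (hsa.mul_left 2)
    have h1 := ha' n
    have h2 := hmul n
    obtain ⟨p1, p2⟩ := hα n
    obtain ⟨q1, q2⟩ := hα (n+1)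
    rw [← div_eq_mul_inv, le_div_iff₀ (by linarith)]
    have : α n * α (n+1) ≤ 1 := by nlinarith
    have : α n * (a n : ℝ) * α (n+1) ≤ 2 * 1 := by
      apply mul_le_mul <;> linarith
    linarith
  have hP : ∀ n, 0 < ∏ k ∈ Finset.range n, ((a k : ℤ) : ℝ) := fun n =>
    Finset.prod_pos fun k _ => by linarith [ha' k]
  have hB : ∀ n, 0 < ∏ k ∈ Finset.range n, α k := fun n =>
    Finset.prod_pos fun k _ => (hα k).1
  have hBle : ∀ n, ∏ k ∈ Finset.range n, α k ≤ (1/2)^n := fun n => by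
    calc ∏ k ∈ Finset.range n, α k ≤ ∏ k ∈ Finset.range n, (1/2:ℝ) :=
          Finset.prod_le_prod (fun k _ => (hα k).1.le) (fun k _ => (hα k).2.le)
      _ = _ := by simp
  obtain ⟨K, hK0, hK⟩ : ∃ K : ℝ, 0 < K ∧ ∀ n, (∏ k ∈ Finset.range n, α k) ≤
      K / ∏ k ∈ Finset.range n, ((a k : ℤ) : ℝ) := by
    refine ⟨Real.exp (∑' n, α n * α (n+1)), Real.exp_pos _, fun n => ?_⟩
    rw [le_div_iff₀ (hP n), ← Finset.prod_mul_distrib]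
    calc ∏ k ∈ Finset.range n, (α k * (a k : ℝ))
        ≤ ∏ k ∈ Finset.range n, Real.exp (α k * α (k+1)) := by
          refine Finset.prod_le_prod (fun k _ => ?_) (fun k _ => ?_)
          · exact mul_nonneg (hα k).1.le (by linarith [ha' k])
          · rw [hmul k, add_comm]; exact Real.add_one_le_exp _
      _ = Real.exp (∑ k ∈ Finset.range n, α k * α (k+1)) := (Real.exp_sum _ _).symm
      _ ≤ _ := Real.exp_le_exp.2
          (hsx.sum_le_tsum _ fun k _ => (mul_pos (hα k).1 (hα (k+1)).1).le)
  have hL : 0 ≤ Real.log (1 + C) := Real.log_nonneg (by linarith)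
  have hlog : ∀ n, Real.log (1 / α (n+1)) ≤ v n * (a n : ℝ) + Real.log (1 + C) := fun n => by
    have h0 : 0 < 1 / α (n+1) := one_div_pos.2 (hα (n+1)).1
    have hpos : 0 ≤ v n * (a n : ℝ) := mul_nonneg (hv n).le (by linarith [ha' n])
    have he : 1 ≤ Real.exp (v n * (a n : ℝ)) := Real.one_le_exp hpos
    have h1 : 1 / α (n+1) ≤ Real.exp (v n * (a n : ℝ)) * (1 + C) := by
      rw [hrec (n+1), hform n]
      have := (abs_le.1 (hC n)).2
      have := (hα (n+1+1)).1
      nlinarith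
    calc Real.log (1 / α (n+1)) ≤ Real.log (Real.exp (v n * (a n : ℝ)) * (1 + C)) :=
          Real.log_le_log h0 h1
      _ = _ := by rw [Real.log_mul (Real.exp_pos _).ne' (by linarith), Real.log_exp]
  have hs : Summable (fun n => v (n+1) / ∏ k ∈ Finset.range (n+1), ((a k : ℤ) : ℝ)) := by
    refine (ENNReal.summable_toReal hsum).congr fun n => ?_
    exact ENNReal.toReal_ofReal (div_pos (hv _) (hP _)).le
  have hlogpos : ∀ n, 0 ≤ Real.log (1 / α n) := fun n => by
    apply Real.log_nonneg
    rw [le_div_iff₀ (hα n).1]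
    linarith [(hα n).2]
  have key : Summable (fun n => (∏ k ∈ Finset.range n, α k) * Real.log (1 / α n)) := by
    rw [← summable_nat_add_iff 2]
    have hg : Summable (fun n : ℕ => ((1:ℝ)/2)^n) := summable_geometric_two
    refine Summable.of_nonneg_of_le (fun n => mul_nonneg (hB _).le (hlogpos _)) (fun n => ?_)
      ((hs.mul_left (2 * K)).add (((summable_nat_add_iff 2).2 hg).mul_left (Real.log (1 + C))))
    have e1 : (∏ k ∈ Finset.range (n+2), α k) * (v (n+1) * (a (n+1) : ℝ)) ≤
        2 * K * (v (n+1) / ∏ k ∈ Finset.range (n+1), ((a k : ℤ) : ℝ)) := by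
      rw [Finset.prod_range_succ]
      have h2 := hmul (n+1)
      obtain ⟨p1, p2⟩ := hα (n+1)
      obtain ⟨q1, q2⟩ := hα (n+1+1)
      have h3 : α (n+1) * (a (n+1) : ℝ) ≤ 2 := by nlinarith
      have h4 := mul_le_mul_of_nonneg_right (hK (n+1)) (hv (n+1)).le
      have h5 : 0 ≤ (∏ k ∈ Finset.range (n+1), α k) * v (n+1) := mul_nonneg (hB _).le (hv _).le
      calc (∏ k ∈ Finset.range (n+1), α k) * α (n+1) * (v (n+1) * (a (n+1) : ℝ))
          = ((∏ k ∈ Finset.range (n+1), α k) * v (n+1)) * (α (n+1) * (a (n+1) : ℝ)) := by ring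
        _ ≤ ((∏ k ∈ Finset.range (n+1), α k) * v (n+1)) * 2 :=
            mul_le_mul_of_nonneg_left h3 h5
        _ ≤ (K / (∏ k ∈ Finset.range (n+1), ((a k : ℤ) : ℝ)) * v (n+1)) * 2 := by linarith
        _ = _ := by ring
    have e2 := mul_le_mul_of_nonneg_right (hBle (n+2)) hL
    have e3 := mul_le_mul_of_nonneg_left (hlog (n+1)) (hB (n+2)).le
    rw [mul_add] at e3
    linarith
  exact key.tsum_ofReal_ne_top
end

section
/- Let (α_n)_{n≥0} and (a_n)_{n≥0} be sequences with α_n ∈ (0,1/2) and a_n an integer with a_n ≥ 2, satisfying 1/α_n = a_n − α_{n+1} for all n ≥ 0. Suppose there are positive reals (v_n)_{n≥0} with v_n → +∞ and a uniformly bounded sequence of reals (η_n)_{n≥0} such that a_{n+1} = e^{v_n a_n} + η_n for all n ≥ 0. Then there exists n_0 ≥ 0 such that for all n ≥ n_0, 1/α_{n+1} ≥ e^{2/α_n}. -/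
open Filter

/-- For a spiky number there exists `n₀` such that `1/α_{n+1} ≥ e^{2/α_n}` for all `n ≥ n₀`. -/
theorem spiky_eventually_double_exponential
    (α : ℕ → ℝ) (a : ℕ → ℤ) (v η : ℕ → ℝ)
    (hα : ∀ n, α n ∈ Set.Ioo (0:ℝ) (1/2))
    (ha : ∀ n, 2 ≤ a n)
    (hrec : ∀ n, 1 / α n = (a n : ℝ) - α (n+1))
    (hv : ∀ n, 0 < v n)
    (hvlim : Tendsto v atTop atTop)
    (hη : ∃ C, ∀ n, |η n| ≤ C)
    (hform : ∀ n, ((a (n+1) : ℤ) : ℝ) = Real.exp (v n * (a n : ℝ)) + η n) :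
    ∃ n₀ : ℕ, ∀ n, n₀ ≤ n → Real.exp (2 / α n) ≤ 1 / α (n+1) := by
  obtain ⟨C, hC⟩ := hη
  have hC0 : 0 ≤ C := (abs_nonneg _).trans (hC 0)
  obtain ⟨N, hN⟩ := eventually_atTop.1 (hvlim.eventually_ge_atTop (2 + (C + 1)))
  refine ⟨N, fun n hn => ?_⟩
  have hvn := hN n hn
  have ha2 : (2:ℝ) ≤ (a n : ℝ) := by exact_mod_cast ha n
  have h1 := (hα (n+1)).1
  have h2 := (hα (n+1+1)).2
  have h3 := hrec n
  have h4 := hrec (n+1)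
  have h5 := (abs_le.1 (hC n)).1
  have h6 := hform n
  have e1 : Real.exp (2 / α n) ≤ Real.exp (2 * (a n : ℝ)) := by
    apply Real.exp_le_exp.2
    have : 2 / α n = 2 * (1 / α n) := by ring
    rw [this, h3]
    linarith
  have e2 : Real.exp (2 * (a n : ℝ)) * Real.exp (C + 1) ≤ Real.exp (v n * (a n : ℝ)) := by
    rw [← Real.exp_add]
    apply Real.exp_le_exp.2
    nlinarith
  have e3 := Real.add_one_le_exp (C + 1)
  have e4 : 1 ≤ Real.exp (2 * (a n : ℝ)) := Real.one_le_exp (by linarith)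
  have e5 : Real.exp (2 * (a n : ℝ)) * (C + 1 + 1) ≤ Real.exp (2 * (a n : ℝ)) * Real.exp (C + 1) := by
    gcongr
  have e6 : Real.exp (2 * (a n : ℝ)) + (C + 1) ≤ Real.exp (2 * (a n : ℝ)) * (C + 1 + 1) := by
    nlinarith
  rw [h4]
  linarith
end

section
/- Let (α_m)_{m≥0} be a sequence of reals in (0,1/2) and n ≥ 0 an index such that 1/α_{m+1} ≥ e^{2/α_m} for all m ≥ n. Let E(x) = e^x and E_2(x) = 2e^x, and let E^{∘p}, E_2^{∘p} denote p-fold iterates. Then for every p ≥ 1: E^{∘p}(0) < E_2^{∘(p−1)}(2/α_n) ≤ 2/α_{n+p−1} ≤ log(1/α_{n+p}). In particular, E^{∘p}(0) < log(1/α_{n+p}) for all p ≥ 1. -/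
open Filter

/-- If `1/α_{m+1} ≥ e^{2/α_m}` for all `m ≥ n`, then for every `p ≥ 1`,
`E^{∘p}(0) < E₂^{∘(p-1)}(2/α_n) ≤ 2/α_{n+p-1} ≤ log(1/α_{n+p})`, where
`E(x) = eˣ` and `E₂(x) = 2eˣ`. -/
theorem iterated_exponential_below_log
    (α : ℕ → ℝ) (n : ℕ)
    (hα : ∀ m, α m ∈ Set.Ioo (0:ℝ) (1/2))
    (h : ∀ m, n ≤ m → Real.exp (2 / α m) ≤ 1 / α (m+1)) :
    ∀ p, 1 ≤ p →
      Real.exp^[p] 0 < (fun x => 2 * Real.exp x)^[p-1] (2 / α n) ∧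
      (fun x => 2 * Real.exp x)^[p-1] (2 / α n) ≤ 2 / α (n+p-1) ∧
      2 / α (n+p-1) ≤ Real.log (1 / α (n+p)) := by
  intro p hp
  obtain ⟨q, rfl⟩ : ∃ q, p = q + 1 := ⟨p - 1, by omega⟩
  have e1 : q + 1 - 1 = q := by omega
  have e2 : n + (q + 1) - 1 = n + q := by omega
  rw [e1, e2]
  refine ⟨?_, ?_, ?_⟩
  · clear hp e1 e2
    induction q with
    | zero =>
      have h0 := (hα n).1
      have h1 := (hα n).2
      simp only [zero_add, Function.iterate_one, Function.iterate_zero, id, Real.exp_zero]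
      rw [lt_div_iff₀ h0]
      linarith
    | succ q ih =>
      have ih' := ih
      rw [Function.iterate_succ_apply' Real.exp (q + 1), Function.iterate_succ_apply' _ q (2 / α n)]
      have h1 := Real.exp_lt_exp.mpr ih'
      have h2 := Real.exp_pos ((fun x => 2 * Real.exp x)^[q] (2 / α n))
      show _ < 2 * Real.exp _
      linarith
  · clear hp e1 e2
    induction q with
    | zero => simp
    | succ q ih =>
      rw [Function.iterate_succ_apply' _ q (2 / α n)]
      have h1 := Real.exp_le_exp.mpr ih
      have h2 := h (n + q) (by omega)
      show 2 * Real.exp _ ≤ 2 / α (n + q + 1)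
      have h3 : 2 / α (n + q + 1) = 2 * (1 / α (n + q + 1)) := by ring
      rw [h3]
      linarith
  · have h2 := h (n + q) (by omega)
    have h3 := (hα (n + q + 1)).1
    exact (Real.le_log_iff_exp_le (by positivity)).mpr h2
end

section
/- Let (α_n)_{n≥0} and (a_n)_{n≥0} be sequences with α_n ∈ (0,1/2) and a_n an integer with a_n ≥ 2, satisfying 1/α_n = a_n − α_{n+1} for all n ≥ 0. Suppose there are positive reals (v_n)_{n≥0} with v_n → +∞ and a uniformly bounded sequence of reals (η_n)_{n≥0} such that a_{n+1} = e^{v_n a_n} + η_n for all n ≥ 0, and Σ_{n≥1} v_n/(a_0 a_1 ⋯ a_{n−1}) < +∞. Then the sequence (α_n) is not of Herman type: there exists n ≥ 0 such that for every p ≥ 1, h_{α_{n+p−1}} ∘ ⋯ ∘ h_{α_n}(0) < B_{n+p}. -/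
open Filter
open scoped ENNReal

/-- Yoccoz's function `h_α`. -/
noncomputable def hfun (α : ℝ) (y : ℝ) : ℝ :=
  if y ≤ Real.log (1/α) then Real.exp y else (y + 1 - Real.log (1/α)) / α

/-- `hComp α n p = h_{α_{n+p-1}} ∘ ⋯ ∘ h_{α_n}` (identity when `p = 0`). -/
noncomputable def hComp (α : ℕ → ℝ) (n : ℕ) : ℕ → ℝ → ℝ
  | 0, y => y
  | p+1, y => hfun (α (n+p)) (hComp α n p y)

/-- The shifted Brjuno sum `B_m = ∑_{k≥0} (∏_{i<k} α_{m+i}) log(1/α_{m+k})`. -/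
noncomputable def brjunoShift (α : ℕ → ℝ) (m : ℕ) : ℝ≥0∞ :=
  ∑' k, ENNReal.ofReal ((∏ i ∈ Finset.range k, α (m+i)) * Real.log (1 / α (m+k)))

/-- Any spiky number is not of Herman type. -/
theorem spiky_not_herman
    (α : ℕ → ℝ) (a : ℕ → ℤ) (v η : ℕ → ℝ)
    (hα : ∀ n, α n ∈ Set.Ioo (0:ℝ) (1/2))
    (ha : ∀ n, 2 ≤ a n)
    (hrec : ∀ n, 1 / α n = (a n : ℝ) - α (n+1))
    (hv : ∀ n, 0 < v n)
    (hvlim : Tendsto v atTop atTop)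
    (hη : ∃ C, ∀ n, |η n| ≤ C)
    (hform : ∀ n, ((a (n+1) : ℤ) : ℝ) = Real.exp (v n * (a n : ℝ)) + η n)
    (hsum : ∑' n, ENNReal.ofReal (v (n+1) / ∏ k ∈ Finset.range (n+1), ((a k : ℤ) : ℝ)) ≠ ⊤) :
    ∃ n : ℕ, ∀ p, 1 ≤ p →
      ENNReal.ofReal (hComp α n p 0) < brjunoShift α (n + p) := by
  obtain ⟨C, hC⟩ := hη
  obtain ⟨N, hN⟩ := eventually_atTop.1 (hvlim.eventually_ge_atTop (C + 2))
  have hpos : ∀ n, 0 < α n := fun n => (hα n).1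
  have hC0 : 0 ≤ C := le_trans (abs_nonneg _) (hC 0)
  have key : ∀ m, N ≤ m → (a m : ℝ) < Real.log (1 / α (m+1)) := by
    intro m hm
    have hvm := hN m hm
    have h2 : (2:ℝ) ≤ (a m : ℝ) := by exact_mod_cast ha m
    have hη' := (abs_le.1 (hC m)).1
    have hr := hrec (m+1)
    have hh := (hα (m+1+1)).2
    rw [Real.lt_log_iff_exp_lt (one_div_pos.2 (hpos _)), hr, hform m]
    have e1 : Real.exp (v m * a m) = Real.exp (a m) * Real.exp ((v m - 1) * a m) := by
      rw [← Real.exp_add]; ring_nf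
    have e2 : (v m - 1) * a m + 1 ≤ Real.exp ((v m - 1) * a m) := Real.add_one_le_exp _
    have e3 : (1:ℝ) ≤ Real.exp (a m) := Real.one_le_exp (by linarith)
    have e4 : C + 1 ≤ (v m - 1) * a m := by nlinarith
    rw [e1]
    nlinarith [mul_le_mul_of_nonneg_left e2 (by linarith : (0:ℝ) ≤ Real.exp (a m))]
  have main : ∀ p, hComp α N p 0 < Real.log (1 / α (N+p)) := by
    intro p
    induction p with
    | zero =>
      simp only [hComp]
      apply Real.log_pos
      rw [lt_div_iff₀ (hpos _)]
      linarith [(hα (N+0)).2]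
    | succ p ih =>
      simp only [hComp, hfun, if_pos ih.le]
      have h1 := Real.exp_lt_exp.2 ih
      rw [Real.exp_log (one_div_pos.2 (hpos _)), hrec] at h1
      have := key (N+p) (by omega)
      have := hpos (N+p+1)
      rw [← add_assoc]
      linarith
  refine ⟨N, fun p _ => ?_⟩
  have hL : 0 < Real.log (1 / α (N+p)) := by
    apply Real.log_pos
    rw [lt_div_iff₀ (hpos _)]
    linarith [(hα (N+p)).2]
  refine lt_of_lt_of_le ((ENNReal.ofReal_lt_ofReal_iff hL).2 (main p)) ?_
  unfold brjunoShift
  refine le_trans ?_ (ENNReal.le_tsum 0)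
  simp
end

section
/- Let (α_n)_{n≥0} be a sequence of reals in (0,1/2) that is of Herman type. Then its Brjuno sum converges: B_0 = Σ_{n≥0} β_{n−1} log(1/α_n) < +∞. -/
open Filter
open scoped ENNReal

/-- Any sequence of Herman type is of Brjuno type: the Brjuno sum converges. -/
theorem herman_implies_brjuno
    (α : ℕ → ℝ)
    (hα : ∀ n, α n ∈ Set.Ioo (0:ℝ) (1/2))
    (hherman : ∀ n : ℕ, ∃ p, 1 ≤ p ∧
      brjunoShift α (n + p) ≤ ENNReal.ofReal (hComp α n p 0)) :
    brjunoShift α 0 ≠ ⊤ := by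
  obtain ⟨p, -, hp⟩ := hherman 0
  rw [zero_add] at hp
  have hfin : brjunoShift α p ≠ ⊤ := ne_top_of_le_ne_top ENNReal.ofReal_ne_top hp
  have hsplit := Summable.sum_add_tsum_nat_add' (k := p)
    (f := fun k => ENNReal.ofReal ((∏ i ∈ Finset.range k, α (0+i)) * Real.log (1 / α (0+k))))
    ENNReal.summable
  unfold brjunoShift at hfin ⊢
  rw [← hsplit]
  refine ENNReal.add_ne_top.2 ⟨ENNReal.sum_ne_top.2 fun _ _ => ENNReal.ofReal_ne_top, ?_⟩
  refine ne_top_of_le_ne_top hfin (ENNReal.tsum_le_tsum fun k => ENNReal.ofReal_le_ofReal ?_)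
  simp only [zero_add]
  rw [add_comm k p, Finset.prod_range_add]
  have hlog : 0 ≤ Real.log (1 / α (p + k)) := by
    apply Real.log_nonneg
    rw [le_div_iff₀ (hα _).1]
    linarith [(hα (p + k)).2]
  have h1 : ∏ i ∈ Finset.range p, α i ≤ 1 :=
    Finset.prod_le_one (fun i _ => (hα i).1.le) (fun i _ => by linarith [(hα i).2])
  have h2 : 0 ≤ ∏ i ∈ Finset.range k, α (p + i) :=
    Finset.prod_nonneg fun i _ => (hα _).1.le
  exact mul_le_mul_of_nonneg_right (mul_le_of_le_one_left h2 h1) hlog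
end

section
/- Let Ω ⊆ ℂ be a bounded measurable set of positive area, let U ⊆ ℂ be an open set containing Ω, and let g : U → ℂ be holomorphic and injective. Suppose there are constants 0 < c ≤ C such that c·|x − y| ≤ |g(x) − g(y)| ≤ C·|x − y| for all x, y ∈ Ω. Then for every measurable subset X ⊆ Ω, one has (c/C)² · dens(g(X), g(Ω)) ≤ dens(X, Ω) ≤ (C/c)² · dens(g(X), g(Ω)). -/
open MeasureTheory
open scoped ENNReal

/-- The density of `K` in `Ω`: `area(K ∩ Ω) / area(Ω)`. -/
noncomputable def dens (K Ω : Set ℂ) : ℝ≥0∞ := volume (K ∩ Ω) / volume Ω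

open scoped NNReal

lemma volume_image_le_of_lip (S : Set ℂ) (f : ℂ → ℂ) (K : ℝ≥0) (h : LipschitzOnWith K f S) :
    volume (f '' S) ≤ (K : ℝ≥0∞) ^ 2 * volume S := by
  have hfr : Module.finrank ℝ ℂ = 2 := Complex.finrank_real_complex
  have : (Measure.hausdorffMeasure 2 : Measure ℂ).IsAddHaarMeasure := by
    have := isAddHaarMeasure_hausdorffMeasure (E := ℂ)
    rw [hfr] at this
    exact_mod_cast this
  have h1 := h.hausdorffMeasure_image_le (d := 2) (by norm_num)
  have e := Measure.isAddLeftInvariant_eq_smul (volume : Measure ℂ) (Measure.hausdorffMeasure 2)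
  rw [e]
  simp only [Measure.smul_apply, ENNReal.smul_def, smul_eq_mul]
  rw [mul_left_comm]
  gcongr
  simpa using h1

/-- If `g` is holomorphic and injective on an open neighbourhood of a bounded
measurable set `Ω` of positive area, and bi-Lipschitz with constants `c ≤ C` on
`Ω`, then densities are distorted by at most `(C/c)²`. -/
theorem density_distortion
    (Ω U : Set ℂ) (g : ℂ → ℂ) (c C : ℝ)
    (hΩmeas : MeasurableSet Ω)
    (hΩbdd : Bornology.IsBounded Ω)
    (hΩpos : 0 < volume Ω)
    (hU : IsOpen U) (hΩU : Ω ⊆ U)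
    (hg : DifferentiableOn ℂ g U)
    (hinj : Set.InjOn g U)
    (hc : 0 < c) (hcC : c ≤ C)
    (hbi : ∀ x ∈ Ω, ∀ y ∈ Ω,
      c * dist x y ≤ dist (g x) (g y) ∧ dist (g x) (g y) ≤ C * dist x y) :
    ∀ X : Set ℂ, X ⊆ Ω → MeasurableSet X →
      ENNReal.ofReal ((c/C)^2) * dens (g '' X) (g '' Ω) ≤ dens X Ω ∧
      dens X Ω ≤ ENNReal.ofReal ((C/c)^2) * dens (g '' X) (g '' Ω) := by
  intro X hX _
  have hC : 0 < C := lt_of_lt_of_le hc hcC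
  have up : ∀ S ⊆ Ω, volume (g '' S) ≤ ENNReal.ofReal C ^ 2 * volume S := by
    intro S hS
    refine volume_image_le_of_lip S g C.toNNReal ?_
    refine LipschitzOnWith.of_dist_le_mul fun x hx y hy => ?_
    rw [Real.coe_toNNReal _ hC.le]
    exact (hbi x (hS hx) y (hS hy)).2
  have lo : ∀ S ⊆ Ω, volume S ≤ ENNReal.ofReal c⁻¹ ^ 2 * volume (g '' S) := by
    intro S hS
    have hleft : Set.LeftInvOn (Function.invFunOn g U) g U := hinj.leftInvOn_invFunOn
    have him : Function.invFunOn g U '' (g '' S) = S :=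
      (hleft.mono (hS.trans hΩU)).image_image
    have := volume_image_le_of_lip (g '' S) (Function.invFunOn g U) c⁻¹.toNNReal ?_
    · rwa [him] at this
    refine LipschitzOnWith.of_dist_le_mul ?_
    rintro _ ⟨x, hx, rfl⟩ _ ⟨y, hy, rfl⟩
    rw [hleft (hΩU (hS hx)), hleft (hΩU (hS hy)), Real.coe_toNNReal _ (inv_pos.2 hc).le,
      ← div_eq_inv_mul, le_div_iff₀' hc]
    exact (hbi x (hS hx) y (hS hy)).1
  have fΩ : volume Ω ≠ ∞ := hΩbdd.measure_lt_top.ne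
  have fX : volume X ≠ ∞ := (hΩbdd.subset hX).measure_lt_top.ne
  have fin : ∀ S ⊆ Ω, volume (g '' S) ≠ ∞ := fun S hS => by
    refine ne_top_of_le_ne_top ?_ (up S hS)
    exact ENNReal.mul_ne_top (by simp) (hΩbdd.subset hS).measure_lt_top.ne
  have upr : ∀ S ⊆ Ω, volume.real (g '' S) ≤ C ^ 2 * volume.real S := by
    intro S hS
    have := ENNReal.toReal_mono
      (ENNReal.mul_ne_top (by simp) (hΩbdd.subset hS).measure_lt_top.ne) (up S hS)
    simpa [Measure.real, ENNReal.toReal_mul, hC.le] using this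
  have lor : ∀ S ⊆ Ω, c ^ 2 * volume.real S ≤ volume.real (g '' S) := by
    intro S hS
    have := ENNReal.toReal_mono
      (ENNReal.mul_ne_top (by simp) (fin S hS)) (lo S hS)
    rw [ENNReal.toReal_mul, ENNReal.toReal_pow, ENNReal.toReal_ofReal (inv_pos.2 hc).le,
      inv_pow, ← div_eq_inv_mul, le_div_iff₀' (by positivity)] at this
    exact this
  have pΩ : 0 < volume.real Ω := ENNReal.toReal_pos hΩpos.ne' fΩ
  have pg : 0 < volume.real (g '' Ω) := lt_of_lt_of_le (by positivity) (lor Ω subset_rfl)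
  have d1 : dens X Ω = ENNReal.ofReal (volume.real X / volume.real Ω) := by
    rw [dens, Set.inter_eq_left.2 hX, ENNReal.ofReal_div_of_pos pΩ, ofReal_measureReal fX,
      ofReal_measureReal fΩ]
  have d2 : dens (g '' X) (g '' Ω)
      = ENNReal.ofReal (volume.real (g '' X) / volume.real (g '' Ω)) := by
    rw [dens, Set.inter_eq_left.2 (Set.image_mono hX), ENNReal.ofReal_div_of_pos pg,
      ofReal_measureReal (fin X hX), ofReal_measureReal (fin Ω subset_rfl)]
  have nX : 0 ≤ volume.real X := measureReal_nonneg
  have nY : 0 ≤ volume.real (g '' X) := measureReal_nonneg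
  have u1 := upr X hX
  have u2 := upr Ω subset_rfl
  have l1 := lor X hX
  have l2 := lor Ω subset_rfl
  rw [d1, d2, ← ENNReal.ofReal_mul (by positivity), ← ENNReal.ofReal_mul (by positivity)]
  generalize volume.real X = a at *
  generalize volume.real Ω = b at *
  generalize volume.real (g '' X) = a' at *
  generalize volume.real (g '' Ω) = b' at *
  constructor <;> apply ENNReal.ofReal_le_ofReal
  · rw [div_pow, div_mul_div_comm, div_le_div_iff₀ (by positivity) pΩ]
    calc c ^ 2 * a' * b = a' * (c ^ 2 * b) := by ring
      _ ≤ (C ^ 2 * a) * b' := by gcongr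
      _ = a * (C ^ 2 * b') := by ring
  · rw [div_pow, div_mul_div_comm, div_le_div_iff₀ pΩ (by positivity)]
    calc a * (c ^ 2 * b') = (c ^ 2 * a) * b' := by ring
      _ ≤ a' * (C ^ 2 * b) := by gcongr
      _ = C ^ 2 * a' * b := by ring
end
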